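/- Let a < b, let S, R : [a,b) → Mat(n×n, ℝ) be maps with S(r) and R(r) symmetric for every r, the entries of S continuously differentiable, satisfying S'(r) = −S(r)² − R(r) for every r ∈ [a,b), and suppose there is c ∈ ℝ with ⟨R(r)x, x⟩ ≥ c|x|² for every r ∈ [a,b) and every x ∈ ℝⁿ. Then the largest eigenvalue μ_max of S satisfies μ_max(r) ≤ μ_max(a) − c(r − a) for every r ∈ [a,b); in particular μ_max is bounded above on every bounded subinterval. -/

import Mathlib

/-!
Fix a unit eigenvector `x` of `S r` for `μmax r`. Along the Riccati flow `t ↦ ⟨S t x, x⟩` has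
derivative `-|S t x|² - ⟨R t x, x⟩ ≤ -c`, so it drops by at least `c (r - s)` between `s` and `r`.
At `r` it equals `μmax r`, and at `s` it is at most `μmax s` by the Rayleigh bound. Since the test
vector is frozen at the later time, `μmax` itself is never differentiated.
-/

open Set Filter Topology Matrix

/-- `μ` is the largest (real) eigenvalue of the matrix `A`. -/
def IsMaxEigenvalue {n : ℕ} (A : Matrix (Fin n) (Fin n) ℝ) (μ : ℝ) : Prop :=
  (∃ v : Fin n → ℝ, v ≠ 0 ∧ A.mulVec v = μ • v) ∧
  ∀ μ' : ℝ, (∃ v : Fin n → ℝ, v ≠ 0 ∧ A.mulVec v = μ' • v) → μ' ≤ μ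

section Spectrum

variable {ι : Type*} [Fintype ι] [DecidableEq ι]

theorem mem_spectrum_iff_exists_mulVec_eq_smul {K : Type*} [Field K] {A : Matrix ι ι K} {μ : K} :
    μ ∈ spectrum K A ↔ ∃ v : ι → K, v ≠ 0 ∧ A *ᵥ v = μ • v := by
  rw [← Matrix.spectrum_toLin', ← Module.End.hasEigenvalue_iff_mem_spectrum]
  constructor
  · intro h
    obtain ⟨v, hv⟩ := h.exists_hasEigenvector
    exact ⟨v, hv.2, hv.apply_eq_smul⟩
  · rintro ⟨v, hv, hAv⟩
    exact Module.End.hasEigenvalue_of_hasEigenvector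
      (Module.End.hasEigenvector_iff.2 ⟨Module.End.mem_eigenspace_iff.2 hAv, hv⟩)

theorem isMaxEigenvalue_iff_isGreatest_spectrum {n : ℕ} {A : Matrix (Fin n) (Fin n) ℝ} {μ : ℝ} :
    IsMaxEigenvalue A μ ↔ IsGreatest (spectrum ℝ A) μ := by
  simp only [IsMaxEigenvalue, IsGreatest, mem_upperBounds, mem_spectrum_iff_exists_mulVec_eq_smul]

open scoped MatrixOrder in
theorem mulVec_dotProduct_self_le_of_mem_upperBounds_spectrum {A : Matrix ι ι ℝ} (hA : A.IsSymm)
    {μ : ℝ} (hμ : μ ∈ upperBounds (spectrum ℝ A)) (x : ι → ℝ) :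
    A *ᵥ x ⬝ᵥ x ≤ μ * (x ⬝ᵥ x) := by
  have hle : A ≤ algebraMap ℝ (Matrix ι ι ℝ) μ :=
    le_algebraMap_of_spectrum_le (fun _ hν => hμ hν) (Matrix.isHermitian_iff_isSymm.2 hA)
  have hx : 0 ≤ x ⬝ᵥ (algebraMap ℝ (Matrix ι ι ℝ) μ - A) *ᵥ x :=
    (Matrix.le_iff.1 hle).dotProduct_mulVec_nonneg x
  rw [Algebra.algebraMap_eq_smul_one, Matrix.sub_mulVec, Matrix.smul_mulVec, Matrix.one_mulVec,
    dotProduct_sub, dotProduct_smul, smul_eq_mul, sub_nonneg] at hx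
  rwa [dotProduct_comm]

end Spectrum

theorem mul_self_mulVec_dotProduct_of_isSymm {m α : Type*} [Fintype m] [CommSemiring α]
    {A : Matrix m m α} (hA : A.IsSymm) (x : m → α) :
    (A * A) *ᵥ x ⬝ᵥ x = A *ᵥ x ⬝ᵥ A *ᵥ x := by
  rw [← Matrix.mulVec_mulVec, Matrix.dotProduct_mulVec (A *ᵥ x), ← Matrix.mulVec_transpose, hA.eq]

theorem hasDerivWithinAt_mulVec_dotProduct {𝕜 m n : Type*} [NontriviallyNormedField 𝕜]
    [Fintype m] [Fintype n] {A : 𝕜 → Matrix m n 𝕜} {A' : Matrix m n 𝕜} {D : Set 𝕜} {t : 𝕜}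
    (hA : ∀ i j, HasDerivWithinAt (fun s => A s i j) (A' i j) D t) (x : n → 𝕜) (y : m → 𝕜) :
    HasDerivWithinAt (fun s => A s *ᵥ x ⬝ᵥ y) (A' *ᵥ x ⬝ᵥ y) D t :=
  .fun_sum fun i _ => (HasDerivWithinAt.fun_sum fun j _ => (hA i j).mul_const (x j)).mul_const (y i)

section Monotonicity

variable {ι : Type*} [Fintype ι] {D : Set ℝ} {A A' : ℝ → Matrix ι ι ℝ} {c : ℝ}

theorem antitoneOn_mulVec_dotProduct_add_mul (hD : Convex ℝ D)
    (hA : ∀ r ∈ D, ∀ i j, HasDerivWithinAt (fun s => A s i j) (A' r i j) D r) {x : ι → ℝ}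
    (hA' : ∀ r ∈ D, A' r *ᵥ x ⬝ᵥ x ≤ -c * (x ⬝ᵥ x)) :
    AntitoneOn (fun r => A r *ᵥ x ⬝ᵥ x + c * (x ⬝ᵥ x) * r) D := by
  have hderiv : ∀ r ∈ D, HasDerivWithinAt (fun r => A r *ᵥ x ⬝ᵥ x + c * (x ⬝ᵥ x) * r)
      (A' r *ᵥ x ⬝ᵥ x + c * (x ⬝ᵥ x)) D r := fun r hr =>
    (hasDerivWithinAt_mulVec_dotProduct (hA r hr) x x).add (hasDerivAt_const_mul _).hasDerivWithinAt
  refine antitoneOn_of_hasDerivWithinAt_nonpos hD (fun r hr => (hderiv r hr).continuousWithinAt)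
    (fun r hr => (hderiv r (interior_subset hr)).mono interior_subset) fun r hr => ?_
  linarith [hA' r (interior_subset hr)]

theorem antitoneOn_add_mul_of_isGreatest_spectrum [DecidableEq ι] (hD : Convex ℝ D)
    (hsymm : ∀ r ∈ D, (A r).IsSymm)
    (hA : ∀ r ∈ D, ∀ i j, HasDerivWithinAt (fun s => A s i j) (A' r i j) D r)
    (hA' : ∀ r ∈ D, ∀ x : ι → ℝ, A' r *ᵥ x ⬝ᵥ x ≤ -c * (x ⬝ᵥ x))
    {μ : ℝ → ℝ} (hμ : ∀ r ∈ D, IsGreatest (spectrum ℝ (A r)) (μ r)) :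
    AntitoneOn (fun r => μ r + c * r) D := by
  intro s hs r hr hsr
  obtain ⟨x, hx, hAx⟩ := mem_spectrum_iff_exists_mulVec_eq_smul.1 (hμ r hr).1
  have hpos : 0 < x ⬝ᵥ x := dotProduct_self_star_pos_iff.2 hx
  refine le_of_mul_le_mul_right ?_ hpos
  calc (μ r + c * r) * (x ⬝ᵥ x)
      = A r *ᵥ x ⬝ᵥ x + c * (x ⬝ᵥ x) * r := by
        rw [hAx, smul_dotProduct, smul_eq_mul]; ring
    _ ≤ A s *ᵥ x ⬝ᵥ x + c * (x ⬝ᵥ x) * s :=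
        antitoneOn_mulVec_dotProduct_add_mul hD hA (fun t ht => hA' t ht x) hs hr hsr
    _ ≤ μ s * (x ⬝ᵥ x) + c * (x ⬝ᵥ x) * s := by
        gcongr
        exact mulVec_dotProduct_self_le_of_mem_upperBounds_spectrum (hsymm s hs) (hμ s hs).2 x
    _ = (μ s + c * s) * (x ⬝ᵥ x) := by ring

end Monotonicity

theorem neg_sq_sub_mulVec_dotProduct_le {ι : Type*} [Fintype ι] {S R : Matrix ι ι ℝ} {c : ℝ}
    (hS : S.IsSymm) {x : ι → ℝ} (hR : c * (x ⬝ᵥ x) ≤ R *ᵥ x ⬝ᵥ x) :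
    (-(S * S) - R) *ᵥ x ⬝ᵥ x ≤ -c * (x ⬝ᵥ x) := by
  have hsq : 0 ≤ S *ᵥ x ⬝ᵥ S *ᵥ x := dotProduct_self_star_nonneg (S *ᵥ x)
  rw [Matrix.sub_mulVec, Matrix.neg_mulVec, sub_dotProduct, neg_dotProduct,
    mul_self_mulVec_dotProduct_of_isSymm hS]
  linarith

theorem mu_max_linear_upper_bound_general {ι : Type*} [Fintype ι] [DecidableEq ι]
    {D : Set ℝ} (hD : D.OrdConnected) {S R : ℝ → Matrix ι ι ℝ}
    (hSsym : ∀ r ∈ D, (S r).IsSymm)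
    (hODE : ∀ r ∈ D, ∀ i j,
      HasDerivWithinAt (fun s => S s i j) ((-(S r * S r) - R r) i j) D r)
    {c : ℝ} (hR : ∀ r ∈ D, ∀ x : ι → ℝ, c * (x ⬝ᵥ x) ≤ R r *ᵥ x ⬝ᵥ x)
    {μmax : ℝ → ℝ} (hμ : ∀ r ∈ D, IsGreatest (spectrum ℝ (S r)) (μmax r)) :
    (∀ s ∈ D, ∀ r ∈ D, s ≤ r → μmax r ≤ μmax s - c * (r - s)) ∧
    ∀ s ∈ D, ∀ d ∈ D, ∃ C : ℝ, ∀ r ∈ Icc s d, μmax r ≤ C := by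
  have hanti : AntitoneOn (fun r => μmax r + c * r) D :=
    antitoneOn_add_mul_of_isGreatest_spectrum hD.convex hSsym hODE
      (fun r hr x => neg_sq_sub_mulVec_dotProduct_le (hSsym r hr) (hR r hr x)) hμ
  have hbound : ∀ s ∈ D, ∀ r ∈ D, s ≤ r → μmax r ≤ μmax s - c * (r - s) := by
    intro s hs r hr hsr
    have h : μmax r + c * r ≤ μmax s + c * s := hanti hs hr hsr
    linarith
  refine ⟨hbound, fun s hs d hd => ?_⟩
  obtain ⟨C, hC⟩ := isCompact_Icc.bddAbove_image
    (f := fun r => μmax s - c * (r - s)) (K := Icc s d) (by fun_prop)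
  exact ⟨C, fun r hr => (hbound s hs r (hD.out hs hd hr) hr.1).trans (hC (mem_image_of_mem _ hr))⟩

/-- **Linear upper bound for the largest eigenvalue of a Riccati solution.**
Let `S, R : [a,b) → Mat(n×n,ℝ)` take symmetric values, with `S` having `C¹`
entries and satisfying `S' = -S² - R` on `[a,b)`, and assume
`⟨R(r)x, x⟩ ≥ c|x|²` for all `r` and `x`. Then the largest eigenvalue `μ_max`
of `S` satisfies `μ_max(r) ≤ μ_max(a) - c(r - a)` on `[a,b)`; in particular
`μ_max` is bounded above on every bounded subinterval. -/
theorem mu_max_linear_upper_bound {n : ℕ} (a b : ℝ) (hab : a < b)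
    (S R : ℝ → Matrix (Fin n) (Fin n) ℝ)
    (hSsym : ∀ r ∈ Ico a b, (S r).IsSymm)
    (hRsym : ∀ r ∈ Ico a b, (R r).IsSymm)
    (hC1 : ∀ i j, ContDiffOn ℝ 1 (fun r => S r i j) (Ico a b))
    (hODE : ∀ r ∈ Ico a b, ∀ i j,
      HasDerivWithinAt (fun s => S s i j) ((-(S r * S r) - R r) i j) (Ico a b) r)
    (c : ℝ)
    (hR : ∀ r ∈ Ico a b, ∀ x : Fin n → ℝ, c * (x ⬝ᵥ x) ≤ (R r).mulVec x ⬝ᵥ x)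
    (μmax : ℝ → ℝ)
    (hμ : ∀ r ∈ Ico a b, IsMaxEigenvalue (S r) (μmax r)) :
    (∀ r ∈ Ico a b, μmax r ≤ μmax a - c * (r - a)) ∧
    ∀ d ∈ Ico a b, ∃ C : ℝ, ∀ r ∈ Icc a d, μmax r ≤ C := by
  have ha : a ∈ Ico a b := left_mem_Ico.2 hab
  have h := mu_max_linear_upper_bound_general ordConnected_Ico hSsym hODE hR
    fun r hr => isMaxEigenvalue_iff_isGreatest_spectrum.1 (hμ r hr)
  exact ⟨fun r hr => h.1 a ha r hr hr.1, h.2 a ha⟩
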